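/- In the extended network, for every induced edge flow g ∈ ℓ(Λ̃) ⊆ L¹₊(H)^Ẽ, the total travel time can be rewritten as ⟨D(g,·), g⟩ = ∫_H (t_f − t)·Σ_{i∈I} r_i(t) dσ(t) + ∫_H ∇_{d̃} G(t) dσ(t), where ⟨D(g,·), g⟩ := Σ_{e∈Ẽ} ∫_H D_e(g,·)·g_e dσ. -/

import Mathlib

open MeasureTheory Set
open scoped ENNReal

noncomputable section

/-- A real function is *absolutely continuous* on the interval `[a,b]`. -/
def ACOn (f : ℝ → ℝ) (a b : ℝ) : Prop :=
  ∀ ε > 0, ∃ δ > 0, ∀ n : ℕ, ∀ c d : Fin n → ℝ,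
    (∀ k, c k ∈ Set.Icc a b ∧ d k ∈ Set.Icc a b ∧ c k ≤ d k) →
    (Pairwise fun k l => Disjoint (Set.Ioo (c k) (d k)) (Set.Ioo (c l) (d l))) →
    (∑ k, (d k - c k)) < δ → (∑ k, |f (d k) - f (c k)|) < ε

/-- A real function vanishing outside the set `S`. -/
def SuppOn (S : Set ℝ) (f : ℝ → ℝ) : Prop := ∀ t ∉ S, f t = 0

/-- A dynamic-flow network: a finite directed graph `(V,E)`, commodities `I` with
sources `s i`, sinks `d i`, values-of-time `vot i` and network inflow rates `r i`,
a time horizon `[0, tf]` with a flow-carrying horizon `[0, tf']`, and a family of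
traversal-time functions `D e gₑ t` depending on the inflow rate `gₑ` into edge `e`. -/
structure DynNet (V E I : Type) where
  src : E → V
  dst : E → V
  s : I → V
  d : I → V
  vot : I → ℝ
  r : I → ℝ → ℝ
  tf : ℝ
  tf' : ℝ
  D : E → (ℝ → ℝ) → ℝ → ℝ

namespace DynNet

variable {V E I : Type} [Fintype E] [DecidableEq E] [Fintype I] [DecidableEq V]

/-- The time horizon `H = [0, tf]`. -/
def H (N : DynNet V E I) : Set ℝ := Icc 0 N.tf

/-- The flow-carrying horizon `H' = [0, tf']`. -/
def H' (N : DynNet V E I) : Set ℝ := Icc 0 N.tf'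

/-- Membership in `L¹₊(H)`: nonnegative and integrable on `H`. -/
def MemL1pos (N : DynNet V E I) (f : ℝ → ℝ) : Prop :=
  (∀ t, 0 ≤ f t) ∧ IntegrableOn f N.H

/-- Edge exit time `T_e(gₑ, t) = t + D_e(gₑ, t)`. -/
def Te (N : DynNet V E I) (e : E) (ge : ℝ → ℝ) (t : ℝ) : ℝ := t + N.D e ge t

/-- Arrival time after traversing the list of edges `p` (entered at time `t`)
under the edge flows `g`; `arrive g (w.take j) t` is the arrival time `A_{w,j+1}(g,t)`
at (the tail of) the `j`-th edge (0-based) of a walk `w`. -/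
def arrive (N : DynNet V E I) (g : E → ℝ → ℝ) : List E → ℝ → ℝ
  | [], t => t
  | e :: p, t => N.arrive g p (N.Te e (g e) t)

/-- `w` is a (finite, possibly non-simple) walk from `v₁` to `v₂`. -/
def IsWalk (N : DynNet V E I) (v₁ v₂ : V) (w : List E) : Prop :=
  w ≠ [] ∧ w.Chain' (fun e e' => N.dst e = N.src e') ∧
    w.head?.map N.src = some v₁ ∧ w.getLast?.map N.dst = some v₂

/-- Walk-commodity pairs: a walk from `s i` to `d i` together with its commodity `i`. -/
abbrev WalkIdx (N : DynNet V E I) : Type :=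
  {wi : List E × I // N.IsWalk (N.s wi.2) (N.d wi.2) wi.1}

/-- The preimage (within `H`) of `[0,t]` under the arrival time along the prefix `p`
computed with travel times induced by `g`. -/
def arrPre (N : DynNet V E I) (g : E → ℝ → ℝ) (p : List E) (t : ℝ) : Set ℝ :=
  {τ | τ ∈ N.H ∧ N.arrive g p τ ∈ Icc 0 t}

/-- `g` is the network loading of the walk inflow `h` under the *fixed* travel times
induced by `u` (parametrized network loading). -/
def ParamInduces (N : DynNet V E I) (u : E → ℝ → ℝ) (h : N.WalkIdx → ℝ → ℝ)
    (g : E → ℝ → ℝ) : Prop :=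
  ∀ e : E, ∀ t ∈ N.H,
    (∫ s in Icc (0:ℝ) t, g e s) =
      ∑' w : N.WalkIdx,
        ∑ j ∈ Finset.range w.1.1.length,
          if w.1.1[j]? = some e then ∫ s in N.arrPre u (w.1.1.take j) t, h w s else 0

/-- `g` is an edge flow induced by the walk inflow `h`. -/
def Induces (N : DynNet V E I) (h : N.WalkIdx → ℝ → ℝ) (g : E → ℝ → ℝ) : Prop :=
  N.ParamInduces g h g

/-- `f = ℓᵘ_{w,j}(h_w)`: the parametrized edge flow induced (under frozen travel
times `D(u,·)`) by the inflow `hw` into the walk with prefix `p` before the edge. -/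
def IsParamEdgeFlow (N : DynNet V E I) (u : E → ℝ → ℝ) (hw : ℝ → ℝ) (p : List E)
    (f : ℝ → ℝ) : Prop :=
  N.MemL1pos f ∧ ∀ t ∈ N.H, (∫ s in Icc (0:ℝ) t, f s) = ∫ s in N.arrPre u p t, hw s

/-- The walk inflow `h` is nonnegative, `ℓ¹`-summable, and routes the demand
`r i` of every commodity `i`. -/
def FeasibleInflow (N : DynNet V E I) (h : N.WalkIdx → ℝ → ℝ) : Prop :=
  (∀ w, N.MemL1pos (h w)) ∧
  (Summable fun w : N.WalkIdx => ∫ s in N.H, h w s) ∧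
  ∀ i : I, ∀ᵐ t ∂(volume.restrict N.H),
    (∑' w : {w : N.WalkIdx // w.1.2 = i}, h w.1 t) = N.r i t

/-- `h ∈ Λ`: admissible walk inflows (feasible and admitting an induced edge flow
supported on `H'`). -/
def InLambda (N : DynNet V E I) (h : N.WalkIdx → ℝ → ℝ) : Prop :=
  N.FeasibleInflow h ∧
  ∃ g : E → ℝ → ℝ, (∀ e, N.MemL1pos (g e) ∧ SuppOn N.H' (g e)) ∧ N.Induces h g

/-- `load` is a network-loading operator `ℓ : Λ → L¹₊(H)^E`. -/
def IsLoading (N : DynNet V E I) (load : (N.WalkIdx → ℝ → ℝ) → E → ℝ → ℝ) : Prop :=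
  ∀ h, N.InLambda h →
    (∀ e, N.MemL1pos (load h e) ∧ SuppOn N.H' (load h e)) ∧ N.Induces h (load h)

/-- `ℓ(Λ)`: the set of edge flows induced via the loading operator `load`. -/
def InducedBy (N : DynNet V E I) (load : (N.WalkIdx → ℝ → ℝ) → E → ℝ → ℝ) :
    Set (E → ℝ → ℝ) := {g | ∃ h, N.InLambda h ∧ load h = g}

/-- The set of all edge flows (supported on `H'`) induced by some admissible walk inflow. -/
def InducedSet (N : DynNet V E I) : Set (E → ℝ → ℝ) :=
  {g | (∀ e, N.MemL1pos (g e) ∧ SuppOn N.H' (g e)) ∧ ∃ h, N.InLambda h ∧ N.Induces h g}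

/-- Assumption (TravelGeneral), the parts not involving the loading operator:
absolute continuity, FIFO, the lower bound `τmin` on `H'`, and existence of edge
outflow rates. -/
structure TravelGeneral (N : DynNet V E I) (τmin : ℝ) : Prop where
  tmin_pos : 0 < τmin
  nonneg : ∀ e ge, N.MemL1pos ge → ∀ t ∈ N.H, 0 ≤ N.D e ge t
  ac : ∀ e ge, N.MemL1pos ge → ACOn (N.D e ge) 0 N.tf
  fifo : ∀ e ge, N.MemL1pos ge → MonotoneOn (N.Te e ge) N.H
  lb : ∀ e ge, N.MemL1pos ge → ∀ t ∈ N.H', τmin ≤ N.D e ge t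
  outflow : ∀ e ge, N.MemL1pos ge → ∃ gm, N.MemL1pos gm ∧
    ∀ t ∈ N.H, (∫ s in {τ | τ ∈ N.H ∧ N.Te e ge τ ∈ Icc 0 t}, ge s)
      = ∫ s in Icc (0:ℝ) t, gm s

/-- Assumption (TravelGeneral), upper-bound part: travel times of induced flows
are bounded by `τmax` on `H'`. -/
def TravelUB (N : DynNet V E I) (load : (N.WalkIdx → ℝ → ℝ) → E → ℝ → ℝ)
    (τmax : ℝ) : Prop :=
  0 < τmax ∧ ∀ h, N.InLambda h → ∀ e, ∀ t ∈ N.H', N.D e (load h e) t ≤ τmax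

/-- Assumption (AMapsHToH) for flows induced by the loading operator. -/
def AMapsHToH (N : DynNet V E I) (load : (N.WalkIdx → ℝ → ℝ) → E → ℝ → ℝ) : Prop :=
  ∀ h, N.InLambda h → ∀ w : N.WalkIdx, ∀ j ≤ w.1.1.length, ∀ t ∈ N.H,
    N.arrive (load h) (w.1.1.take j) t ∈ N.H

/-- Assumption (AMapsHToH), loading-operator-free version. -/
def AMapsHToHSet (N : DynNet V E I) : Prop :=
  ∀ g ∈ N.InducedSet, ∀ w : N.WalkIdx, ∀ j ≤ w.1.1.length, ∀ t ∈ N.H,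
    N.arrive g (w.1.1.take j) t ∈ N.H

/-- Assumption (AMapsHToH), set version for flows in `InducedSet`. -/
def TravelUBSet (N : DynNet V E I) (τmax : ℝ) : Prop :=
  0 < τmax ∧ ∀ g ∈ N.InducedSet, ∀ e, ∀ t ∈ N.H', N.D e (g e) t ≤ τmax

/-- Assumption (LuImplL): if a feasible walk inflow `h` induces `u` under the travel
times frozen to `D(u,·)` (for `u` supported on `H'`), then `h ∈ Λ` and `ℓ(h) = u`. -/
def LuImplL (N : DynNet V E I) (load : (N.WalkIdx → ℝ → ℝ) → E → ℝ → ℝ) : Prop :=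
  ∀ u : E → ℝ → ℝ, (∀ e, N.MemL1pos (u e) ∧ SuppOn N.H' (u e)) →
    ∀ h, N.FeasibleInflow h → N.ParamInduces u h u → N.InLambda h ∧ load h = u

/-- Assumption (TravelMono): monotonicity of cumulative outflows in cumulative
inflows, and monotonicity of travel times in inflow rates. -/
structure TravelMono (N : DynNet V E I) : Prop where
  cum_mono : ∀ e ge g'e, N.MemL1pos ge → N.MemL1pos g'e →
    (∀ t ∈ N.H, (∫ s in Icc (0:ℝ) t, g'e s) ≤ ∫ s in Icc (0:ℝ) t, ge s) →
    ∀ t ∈ N.H, (∫ s in {τ | τ ∈ N.H ∧ N.Te e g'e τ ∈ Icc 0 t}, g'e s)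
      ≤ ∫ s in {τ | τ ∈ N.H ∧ N.Te e ge τ ∈ Icc 0 t}, ge s
  D_mono : ∀ e ge g'e, N.MemL1pos ge → N.MemL1pos g'e →
    (∀ᵐ t ∂(volume.restrict N.H), g'e t ≤ ge t) →
    ∀ t ∈ N.H, N.D e g'e t ≤ N.D e ge t

/-- Weighted total travel time `Ψ_{(w,i)}(g,t) = γ_i · (A_{w,|w|+1}(g,t) − t)`. -/
def psi (N : DynNet V E I) (g : E → ℝ → ℝ) (i : I) (w : List E) (t : ℝ) : ℝ :=
  N.vot i * (N.arrive g w t - t)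

/-- Total toll `P^p_w(g,t)` paid along the walk `w` entered at time `t`. -/
def toll (N : DynNet V E I) (p : E → ℝ → ℝ) (g : E → ℝ → ℝ) : List E → ℝ → ℝ
  | [], _ => 0
  | e :: rest, t => p e t + N.toll p g rest (N.Te e (g e) t)

/-- Combined cost `Ψ_w(g,t) + P^p_w(g,t)` of a walk-commodity pair. -/
def cost (N : DynNet V E I) (p : E → ℝ → ℝ) (g : E → ℝ → ℝ) (w : N.WalkIdx)
    (t : ℝ) : ℝ :=
  N.psi g w.1.2 w.1.1 t + N.toll p g w.1.1 t

/-- `h` is a `p`-dynamic user equilibrium (`p`-DUE). -/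
def IsDUE (N : DynNet V E I) (load : (N.WalkIdx → ℝ → ℝ) → E → ℝ → ℝ)
    (p : E → ℝ → ℝ) (h : N.WalkIdx → ℝ → ℝ) : Prop :=
  N.InLambda h ∧
  ∀ w : N.WalkIdx, ∀ᵐ t ∂(volume.restrict N.H),
    0 < h w t → ∀ w' : N.WalkIdx, w'.1.2 = w.1.2 →
      N.cost p (load h) w t ≤ N.cost p (load h) w' t

/-- `u` is implementable via the nonnegative tolls `p` and the walk inflow `h`. -/
def ImplementableVia (N : DynNet V E I) (load : (N.WalkIdx → ℝ → ℝ) → E → ℝ → ℝ)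
    (u : E → ℝ → ℝ) (p : E → ℝ → ℝ) (h : N.WalkIdx → ℝ → ℝ) : Prop :=
  (∀ e t, 0 ≤ p e t) ∧ N.IsDUE load p h ∧ load h = u ∧
  (∑ e : E, ∫⁻ t in N.H, ENNReal.ofReal (p e t * u e t)) < ⊤

/-- `u` is implementable. -/
def Implementable (N : DynNet V E I) (load : (N.WalkIdx → ℝ → ℝ) → E → ℝ → ℝ)
    (u : E → ℝ → ℝ) : Prop :=
  ∃ p h, N.ImplementableVia load u p h

/-- Total travel time `⟨D(g,·), g⟩` of the edge flow `g`. -/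
def totalCost (N : DynNet V E I) (g : E → ℝ → ℝ) : ℝ :=
  ∑ e : E, ∫ t in N.H, N.D e (g e) t * g e t

/-- `g` is a system optimal flow. -/
def SysOpt (N : DynNet V E I) (load : (N.WalkIdx → ℝ → ℝ) → E → ℝ → ℝ)
    (g : E → ℝ → ℝ) : Prop :=
  g ∈ N.InducedBy load ∧ ∀ g' ∈ N.InducedBy load, N.totalCost g ≤ N.totalCost g'

/-- Objective value `Σ_w ⟨Ψ_w(u,·), h_w⟩` of the master problem `P(u)`
(valued in `ℝ≥0∞` as it may be infinite). -/
def objVal (N : DynNet V E I) (u : E → ℝ → ℝ) (h : N.WalkIdx → ℝ → ℝ) : ℝ≥0∞ :=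
  ∑' w : N.WalkIdx, ∫⁻ t in N.H, ENNReal.ofReal (N.psi u w.1.2 w.1.1 t * h w t)

/-- Cumulative edge inflow `G⁺ₑ(t)`. -/
def cumIn (ge : ℝ → ℝ) (t : ℝ) : ℝ := ∫ s in Icc (0:ℝ) t, ge s

/-- Cumulative edge outflow `G⁻ₑ(t)`. -/
def cumOut (N : DynNet V E I) (e : E) (ge : ℝ → ℝ) (t : ℝ) : ℝ :=
  ∫ s in {τ | τ ∈ N.H ∧ N.Te e ge τ ∈ Icc 0 t}, ge s

/-- Cumulative node balance `∇_v G(t)`. -/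
def nodeBal (N : DynNet V E I) (g : E → ℝ → ℝ) (v : V) (t : ℝ) : ℝ :=
  (∑ e : E, if N.src e = v then cumIn (g e) t else 0)
    - ∑ e : E, if N.dst e = v then N.cumOut e (g e) t else 0

/-- Cumulative network inflow `∫₀ᵗ Σ_{i : s_i = v} r_i` at node `v`. -/
def netIn (N : DynNet V E I) (v : V) (t : ℝ) : ℝ :=
  ∫ s in Icc (0:ℝ) t, ∑ i : I, (if N.s i = v then N.r i s else 0)

/-- Vickrey queue length `q_e(gₑ, t)` on an edge with free-flow time `τe`. -/
def vickQueue (N : DynNet V E I) (e : E) (τe : ℝ) (ge : ℝ → ℝ) (t : ℝ) : ℝ :=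
  (∫ s in Icc (0:ℝ) t, ge s) - ∫ s in {τ | τ ∈ N.H ∧ N.Te e ge τ ≤ t + τe}, ge s

/-- Edge `e` follows the Vickrey queuing model with free-flow time `τe > 0` and
service rate `νe > 0`. -/
def IsVickreyEdge (N : DynNet V E I) (e : E) (τe νe : ℝ) : Prop :=
  0 < τe ∧ 0 < νe ∧
  ∀ ge, N.MemL1pos ge →
    (∀ t ∈ N.H, N.D e ge t = τe + N.vickQueue e τe ge t / νe) ∧
    (∀ t ∈ N.H, 0 ≤ N.vickQueue e τe ge t) ∧
    (∀ t₁ ∈ N.H, ∀ t₂ ∈ N.H, t₁ ≤ t₂ →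
      N.cumOut e ge t₂ - N.cumOut e ge t₁ ≤ νe * (t₂ - t₁))

/-- Edge `e` has constant travel time `τe` (e.g. a Vickrey edge with `ν = ∞`). -/
def IsConstEdge (N : DynNet V E I) (e : E) (τe : ℝ) : Prop :=
  ∀ ge, N.MemL1pos ge → ∀ t ∈ N.H, N.D e ge t = τe

end DynNet

/-- The extended network: a super source `s̃ = Sum.inr false` with a zero-travel-time
edge `(s̃, s_i)` (encoded `Sum.inr (Sum.inl i)`) for each commodity `i`, and a super
sink `d̃ = Sum.inr true` with a zero-travel-time edge `(d, d̃)`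
(encoded `Sum.inr (Sum.inr ())`); the original edges keep their travel times. -/
def DynNet.extend {V E I : Type} (N : DynNet V E I) (d0 : V) :
    DynNet (V ⊕ Bool) (E ⊕ (I ⊕ Unit)) I where
  src := fun e => match e with
    | Sum.inl e => Sum.inl (N.src e)
    | Sum.inr (Sum.inl _) => Sum.inr false
    | Sum.inr (Sum.inr _) => Sum.inl d0
  dst := fun e => match e with
    | Sum.inl e => Sum.inl (N.dst e)
    | Sum.inr (Sum.inl i) => Sum.inl (N.s i)
    | Sum.inr (Sum.inr _) => Sum.inr true
  s := fun _ => Sum.inr false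
  d := fun _ => Sum.inr true
  vot := N.vot
  r := N.r
  tf := N.tf
  tf' := N.tf'
  D := fun e ge t => match e with
    | Sum.inl e => N.D e ge t
    | _ => 0

/-!
Read the loading equation as an identity of measures: a flow of rate `f` is the measure `f dt`, and
the flow on an edge is the sum, over all walks and all occurrences of the edge, of the images of the
walk inflows under the arrival times. Integrating the travel times against it, they telescope along
each walk `w` to `A_w(t) - t`, where `A_w(t)` is the arrival time at the super sink. Adding the
remaining time `tf - A_w(t)` leaves `tf - t`, whose integral against all walk inflows is the demand
term. The flow on the edge into the super sink is the sum of the images of the walk inflows under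
`A_w`, so the added part is `∫ (tf - t) g_(d, d̃)`, which is `-∫ ∇_d̃ G` by Fubini.

The infinite sum in the loading equation converges because the walks that carry flow have bounded
length: their flow leaves by `tf'` and spends at least `τmin` on every original edge.
-/

section Calculus

theorem Icc_inter_Iic_eq_Icc_min (a b c : ℝ) : Icc a b ∩ Iic c = Icc a (min b c) := by
  rw [← Ici_inter_Iic, inter_assoc, Iic_inter_Iic, Ici_inter_Iic]

theorem measure_ext_of_measureReal_Icc {μ ν : Measure ℝ} [IsFiniteMeasure μ] [IsFiniteMeasure ν]
    {a b : ℝ} (hμ : ∀ᵐ t ∂μ, t ∈ Icc a b) (hν : ∀ᵐ t ∂ν, t ∈ Icc a b)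
    (h : ∀ t ∈ Icc a b, μ.real (Icc a t) = ν.real (Icc a t)) : μ = ν := by
  refine Measure.ext_of_Iic μ ν fun x => ?_
  rw [← Measure.measure_inter_eq_of_ae hμ, ← Measure.measure_inter_eq_of_ae hν,
    Icc_inter_Iic_eq_Icc_min]
  rcases lt_or_ge (min b x) a with hlt | hle
  · simp only [Icc_eq_empty hlt.not_ge, measure_empty]
  · exact (measureReal_eq_measureReal_iff).1 (h _ ⟨hle, min_le_left b x⟩)

theorem setIntegral_setIntegral_Icc {f : ℝ → ℝ} {a b : ℝ} (hf : IntegrableOn f (Icc a b)) :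
    ∫ t in Icc a b, ∫ s in Icc a t, f s = ∫ s in Icc a b, (b - s) * f s := by
  have hprod : Integrable (fun p : ℝ × ℝ => (Iic p.1).indicator f p.2)
      ((volume.restrict (Icc a b)).prod (volume.restrict (Icc a b))) :=
    (hf.comp_snd _).indicator (measurableSet_le measurable_snd measurable_fst)
  calc ∫ t in Icc a b, ∫ s in Icc a t, f s
      = ∫ t in Icc a b, ∫ s in Icc a b, (Iic t).indicator f s := by
        refine setIntegral_congr_fun measurableSet_Icc fun t ht => ?_
        rw [setIntegral_indicator measurableSet_Iic, Icc_inter_Iic_eq_Icc_min, min_eq_right ht.2]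
    _ = ∫ s in Icc a b, ∫ t in Icc a b, (Ici s).indicator (fun _ => f s) t :=
        integral_integral_swap hprod
    _ = ∫ s in Icc a b, (b - s) * f s := by
        refine setIntegral_congr_fun measurableSet_Icc fun s hs => ?_
        rw [setIntegral_indicator measurableSet_Ici, ← Ici_inter_Iic, inter_right_comm,
          Ici_inter_Ici, Ici_inter_Iic, max_eq_right hs.1, setIntegral_const,
          Real.volume_real_Icc_of_le hs.2, smul_eq_mul]

end Calculus

namespace DynNet

section Positions

variable {E : Type}

/-- The (0-based) positions at which the edge `e` occurs in the walk `p`. -/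
def positions [DecidableEq E] (p : List E) (e : E) : Finset ℕ :=
  {j ∈ Finset.range p.length | p[j]? = some e}

theorem card_positions_le [DecidableEq E] (p : List E) (e : E) :
    (positions p e).card ≤ p.length :=
  (Finset.card_filter_le _ _).trans_eq (Finset.card_range _)

theorem le_length_of_mem_positions [DecidableEq E] {p : List E} {e : E} {j : ℕ}
    (hj : j ∈ positions p e) : j ≤ p.length :=
  (Finset.mem_range.1 (Finset.mem_filter.1 hj).1).le

theorem positions_concat [DecidableEq E] {p : List E} {e : E} (he : e ∉ p) :
    positions (p ++ [e]) e = {p.length} := by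
  ext j
  simp only [positions, Finset.mem_filter, Finset.mem_range, List.length_append,
    List.length_singleton, Finset.mem_singleton]
  constructor
  · rintro ⟨hj, hje⟩
    by_contra hne
    rw [List.getElem?_append_left (by omega)] at hje
    exact he (List.mem_of_getElem? hje)
  · rintro rfl
    simp

theorem sum_sum_positions [Fintype E] [DecidableEq E] {M : Type*} [AddCommMonoid M]
    (p : List E) (F : E → ℕ → M) :
    ∑ e, ∑ j ∈ positions p e, F e j = ∑ j : Fin p.length, F p[j] j := by
  simp only [positions, Finset.sum_filter]
  rw [Finset.sum_comm, Finset.sum_range]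
  simp

end Positions

section Arrival

variable {V E I : Type} (N : DynNet V E I) (g : E → ℝ → ℝ)

/-- Assumption (AMapsHToH) for the single walk `p` and the single flow `g`: travellers entering `p`
within the horizon are still within the horizon at every node of `p`. -/
def StaysInHorizon (p : List E) : Prop :=
  ∀ j ≤ p.length, MapsTo (N.arrive g (p.take j)) N.H N.H

theorem arrive_append (p q : List E) (t : ℝ) :
    N.arrive g (p ++ q) t = N.arrive g q (N.arrive g p t) := by
  induction p generalizing t with
  | nil => rfl
  | cons e _ ih => exact ih _

theorem arrive_take_succ (p : List E) {j : ℕ} (hj : j < p.length) (t : ℝ) :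
    N.arrive g (p.take (j + 1)) t = N.Te p[j] (g p[j]) (N.arrive g (p.take j) t) := by
  rw [← List.take_append_getElem hj, arrive_append]
  rfl

theorem sum_travelTime (p : List E) (t : ℝ) :
    ∑ j : Fin p.length, N.D p[j] (g p[j]) (N.arrive g (p.take j) t) = N.arrive g p t - t := by
  induction p generalizing t with
  | nil => simp [arrive]
  | cons e _ ih =>
    simp only [List.length_cons, Fin.sum_univ_succ, Fin.getElem_fin, Fin.val_zero, Fin.val_succ,
      List.getElem_cons_zero, List.getElem_cons_succ, List.take_zero, List.take_succ_cons, arrive]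
    have ihT := ih (N.Te e (g e) t)
    simp only [Fin.getElem_fin] at ihT
    rw [ihT, Te]
    ring

variable {N g}

theorem sum_map_le_arrive_sub {p : List E} {t : ℝ} {S : Set ℝ} {b : E → ℝ}
    (hb : ∀ e, ∀ s ∈ S, b e ≤ N.D e (g e) s)
    (hS : ∀ j < p.length, N.arrive g (p.take j) t ∈ S) :
    (p.map b).sum ≤ N.arrive g p t - t := by
  rw [← sum_travelTime, ← Fin.sum_univ_fun_getElem]
  exact Finset.sum_le_sum fun j _ => hb _ _ (hS j j.2)

theorem StaysInHorizon.monotoneOn_arrive_take {p : List E} (hst : N.StaysInHorizon g p)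
    (hT : ∀ e, MonotoneOn (N.Te e (g e)) N.H) {j : ℕ} (hj : j ≤ p.length) :
    MonotoneOn (N.arrive g (p.take j)) N.H := by
  induction j with
  | zero => exact monotoneOn_id
  | succ j ih =>
    have hj' := (Nat.lt_of_succ_le hj).le
    exact ((hT p[j]).comp (ih hj') (hst j hj')).congr fun t _ => (N.arrive_take_succ g p hj t).symm

theorem StaysInHorizon.arrive_take_mono {p : List E} (hst : N.StaysInHorizon g p)
    (hD : ∀ e, ∀ t ∈ N.H, 0 ≤ N.D e (g e) t) {t : ℝ} (ht : t ∈ N.H) {j k : ℕ} (hjk : j ≤ k)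
    (hk : k ≤ p.length) : N.arrive g (p.take j) t ≤ N.arrive g (p.take k) t := by
  induction k, hjk using Nat.le_induction with
  | base => exact le_rfl
  | succ k _ ih =>
    rw [arrive_take_succ N g p hk]
    exact (ih (Nat.le_of_succ_le hk)).trans
      (le_add_of_nonneg_right (hD _ _ (hst k (Nat.le_of_succ_le hk) ht)))

theorem StaysInHorizon.le_arrive {p : List E} (hst : N.StaysInHorizon g p)
    (hD : ∀ e, ∀ t ∈ N.H, 0 ≤ N.D e (g e) t) {t : ℝ} (ht : t ∈ N.H) : t ≤ N.arrive g p t := by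
  simpa only [List.take_zero, List.take_length, arrive] using
    hst.arrive_take_mono hD ht (Nat.zero_le p.length) le_rfl

theorem StaysInHorizon.mapsTo_arrive {p : List E} (hst : N.StaysInHorizon g p) :
    MapsTo (N.arrive g p) N.H N.H := by
  simpa only [List.take_length] using hst p.length le_rfl

end Arrival

section FlowMeasure

variable {V E I : Type} (N : DynNet V E I) {f : ℝ → ℝ} {g : E → ℝ → ℝ}

/-- The measure on the horizon with density `f`: it counts the flow of rate `f` by entry time. -/
def flowMeasure (f : ℝ → ℝ) : Measure ℝ :=
  (volume.restrict N.H).withDensity fun t => ENNReal.ofReal (f t)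

theorem measurableSet_H : MeasurableSet N.H := measurableSet_Icc

theorem measurableSet_H' : MeasurableSet N.H' := measurableSet_Icc

theorem ae_flowMeasure_mem_H (f : ℝ → ℝ) : ∀ᵐ t ∂N.flowMeasure f, t ∈ N.H :=
  (withDensity_absolutelyContinuous _ _).ae_le (ae_restrict_mem N.measurableSet_H)

variable {N}

theorem aemeasurable_flowMeasure_of_monotoneOn {φ : ℝ → ℝ} (hφ : MonotoneOn φ N.H) :
    AEMeasurable φ (N.flowMeasure f) :=
  (aemeasurable_restrict_of_monotoneOn N.measurableSet_H hφ).mono_ac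
    (withDensity_absolutelyContinuous _ _)

theorem aemeasurable_travelTime {e : E} (hT : MonotoneOn (N.Te e f) N.H) :
    AEMeasurable (N.D e f) (volume.restrict N.H) :=
  ((aemeasurable_restrict_of_monotoneOn N.measurableSet_H hT).sub aemeasurable_id).congr
    (ae_of_all _ fun _ => add_sub_cancel_left _ _)

theorem flowMeasure_apply (hf : N.MemL1pos f) (S : Set ℝ) :
    N.flowMeasure f S = ENNReal.ofReal (∫ t in S ∩ N.H, f t) := by
  rw [flowMeasure, withDensity_apply', Measure.restrict_restrict' N.measurableSet_H,
    ofReal_integral_eq_lintegral_ofReal (hf.2.mono_set inter_subset_right)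
      (ae_of_all _ hf.1)]

theorem isFiniteMeasure_flowMeasure (hf : N.MemL1pos f) : IsFiniteMeasure (N.flowMeasure f) :=
  ⟨by rw [flowMeasure_apply hf]; exact ENNReal.ofReal_lt_top⟩

theorem measureReal_flowMeasure (hf : N.MemL1pos f) (S : Set ℝ) :
    (N.flowMeasure f).real S = ∫ t in S ∩ N.H, f t := by
  rw [measureReal_def, flowMeasure_apply hf, ENNReal.toReal_ofReal (integral_nonneg hf.1)]

theorem lintegral_flowMeasure (hf : N.MemL1pos f) {φ : ℝ → ℝ≥0∞}
    (hφ : AEMeasurable φ (volume.restrict N.H)) :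
    ∫⁻ t, φ t ∂N.flowMeasure f = ∫⁻ t in N.H, ENNReal.ofReal (f t) * φ t :=
  lintegral_withDensity_eq_lintegral_mul₀ hf.2.aemeasurable.ennreal_ofReal hφ

theorem ae_flowMeasure_mem_of_suppOn {S : Set ℝ} (hf : N.MemL1pos f) (hS : SuppOn S f) :
    ∀ᵐ t ∂N.flowMeasure f, t ∈ S := by
  refine (flowMeasure_apply hf Sᶜ).trans ?_
  rw [setIntegral_eq_zero_of_forall_eq_zero fun t ht => hS t ht.1, ENNReal.ofReal_zero]

theorem integral_mul_eq_toReal_lintegral_flowMeasure (hf : N.MemL1pos f) {φ : ℝ → ℝ}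
    (hφ : AEMeasurable φ (volume.restrict N.H)) (hφ0 : ∀ t ∈ N.H, 0 ≤ φ t) :
    ∫ t in N.H, φ t * f t = (∫⁻ t, ENNReal.ofReal (φ t) ∂N.flowMeasure f).toReal := by
  have hφf : AEStronglyMeasurable (fun t => φ t * f t) (volume.restrict N.H) :=
    hφ.aestronglyMeasurable.mul hf.2.aestronglyMeasurable
  rw [lintegral_flowMeasure hf hφ.ennreal_ofReal, integral_eq_lintegral_of_nonneg_ae ?nonneg hφf]
  case nonneg =>
    filter_upwards [ae_restrict_mem N.measurableSet_H] with t ht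
    exact mul_nonneg (hφ0 t ht) (hf.1 t)
  congr 1
  refine lintegral_congr fun t => ?_
  rw [mul_comm, ENNReal.ofReal_mul (hf.1 t)]

theorem StaysInHorizon.aemeasurable_arrive_take {p : List E} (hst : N.StaysInHorizon g p)
    (hT : ∀ e, MonotoneOn (N.Te e (g e)) N.H) {j : ℕ} (hj : j ≤ p.length) :
    AEMeasurable (N.arrive g (p.take j)) (N.flowMeasure f) :=
  aemeasurable_flowMeasure_of_monotoneOn (hst.monotoneOn_arrive_take hT hj)

theorem StaysInHorizon.aemeasurable_arrive {p : List E} (hst : N.StaysInHorizon g p)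
    (hT : ∀ e, MonotoneOn (N.Te e (g e)) N.H) :
    AEMeasurable (N.arrive g p) (N.flowMeasure f) := by
  simpa only [List.take_length] using hst.aemeasurable_arrive_take hT le_rfl

theorem lintegral_sum_travelTime (hT : ∀ e, MonotoneOn (N.Te e (g e)) N.H)
    (hD : ∀ e, ∀ t ∈ N.H, 0 ≤ N.D e (g e) t) {p : List E} (hst : N.StaysInHorizon g p) :
    ∑ j : Fin p.length, ∫⁻ t, ENNReal.ofReal (N.D p[j] (g p[j]) (N.arrive g (p.take j) t))
      ∂N.flowMeasure f = ∫⁻ t, ENNReal.ofReal (N.arrive g p t - t) ∂N.flowMeasure f := by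
  have hmeas (j : Fin p.length) :
      AEMeasurable (fun t => N.D p[j] (g p[j]) (N.arrive g (p.take j) t)) (N.flowMeasure f) := by
    refine ((hst.aemeasurable_arrive_take hT (Nat.succ_le_of_lt j.2)).sub
      (hst.aemeasurable_arrive_take hT j.2.le)).congr (ae_of_all _ fun t => ?_)
    rw [Pi.sub_apply, N.arrive_take_succ g p j.2, Te, add_sub_cancel_left]
    rfl
  rw [← lintegral_finsetSum' _ fun j _ => (hmeas j).ennreal_ofReal]
  refine lintegral_congr_ae ?_
  filter_upwards [N.ae_flowMeasure_mem_H f] with t ht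
  rw [← ENNReal.ofReal_sum_of_nonneg fun (j : Fin p.length) _ => hD _ _ (hst j j.2.le ht),
    sum_travelTime]

end FlowMeasure

section Demand

variable {V E I : Type} {N : DynNet V E I} {h : N.WalkIdx → ℝ → ℝ}

theorem FeasibleInflow.tsum_flowMeasure_univ_ne_top (hh : N.FeasibleInflow h) :
    ∑' w, N.flowMeasure (h w) univ ≠ ⊤ := by
  simp only [flowMeasure_apply (hh.1 _), univ_inter]
  exact hh.2.1.tsum_ofReal_ne_top

variable [Countable E]

theorem FeasibleInflow.ae_summable [Countable I] (hh : N.FeasibleInflow h) :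
    ∀ᵐ t ∂volume.restrict N.H, Summable fun w => h w t := by
  have hmeas w : AEMeasurable (fun t => ENNReal.ofReal (h w t)) (volume.restrict N.H) :=
    (hh.1 w).2.aemeasurable.ennreal_ofReal
  have hfin : ∫⁻ t in N.H, ∑' w, ENNReal.ofReal (h w t) ≠ ⊤ := by
    rw [lintegral_tsum hmeas]
    simpa only [flowMeasure, withDensity_apply _ MeasurableSet.univ, Measure.restrict_univ] using
      hh.tsum_flowMeasure_univ_ne_top
  filter_upwards [ae_lt_top' (AEMeasurable.tsum hmeas) hfin] with t ht
  exact (ENNReal.summable_toReal ht.ne).congr fun w => ENNReal.toReal_ofReal ((hh.1 w).1 t)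

theorem FeasibleInflow.ae_tsum_eq_sum_r [Fintype I] (hh : N.FeasibleInflow h) :
    ∀ᵐ t ∂volume.restrict N.H, ∑' w, h w t = ∑ i, N.r i t := by
  filter_upwards [hh.ae_summable, ae_all_iff.2 hh.2.2] with t hsum hr
  let fibers := Equiv.sigmaFiberEquiv fun w : N.WalkIdx => w.1.2
  calc ∑' w, h w t = ∑' c, h (fibers c) t := (fibers.tsum_eq _).symm
    _ = ∑' i, ∑' w : {w : N.WalkIdx // w.1.2 = i}, h w.1 t :=
      (fibers.summable_iff.2 hsum).tsum_sigma
    _ = ∑ i, N.r i t := by rw [tsum_fintype]; exact Finset.sum_congr rfl fun i _ => hr i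

theorem FeasibleInflow.sum_flowMeasure [Fintype I] (hh : N.FeasibleInflow h) :
    Measure.sum (fun w => N.flowMeasure (h w)) = N.flowMeasure fun t => ∑ i, N.r i t := by
  refine Measure.ext fun S hS => ?_
  simp only [Measure.sum_apply _ hS, flowMeasure, withDensity_apply _ hS]
  rw [← lintegral_tsum fun w => (hh.1 w).2.aemeasurable.ennreal_ofReal.restrict]
  refine lintegral_congr_ae (ae_restrict_of_ae ?_)
  filter_upwards [hh.ae_summable, hh.ae_tsum_eq_sum_r] with t hsum hr
  rw [← hr, ENNReal.ofReal_tsum_of_nonneg (fun w => (hh.1 w).1 t) hsum]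

end Demand

section Loading

variable {V E I : Type} [DecidableEq E] {N : DynNet V E I} {g : E → ℝ → ℝ}
  {h : N.WalkIdx → ℝ → ℝ}

/-- The right-hand side of the loading equation for the edge `e`, as a measure: the travellers of
all walks, counted by their arrival times at the occurrences of `e` under the edge flow `g`. -/
def loadMeasure (N : DynNet V E I) (g : E → ℝ → ℝ) (h : N.WalkIdx → ℝ → ℝ) (e : E) : Measure ℝ :=
  Measure.sum fun w : N.WalkIdx =>
    ∑ j ∈ positions w.1.1 e, (N.flowMeasure (h w)).map (N.arrive g (w.1.1.take j))

theorem loadMeasure_apply (hT : ∀ e, MonotoneOn (N.Te e (g e)) N.H)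
    (hst : ∀ w : N.WalkIdx, N.StaysInHorizon g w.1.1) (e : E) {S : Set ℝ} (hS : MeasurableSet S) :
    N.loadMeasure g h e S = ∑' w : N.WalkIdx, ∑ j ∈ positions w.1.1 e,
      N.flowMeasure (h w) (N.arrive g (w.1.1.take j) ⁻¹' S) := by
  rw [loadMeasure, Measure.sum_apply _ hS]
  refine tsum_congr fun w => ?_
  rw [Measure.finsetSum_apply]
  exact Finset.sum_congr rfl fun j hj => Measure.map_apply_of_aemeasurable
    ((hst w).aemeasurable_arrive_take hT (le_length_of_mem_positions hj)) hS

theorem lintegral_loadMeasure (hT : ∀ e, MonotoneOn (N.Te e (g e)) N.H)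
    (hst : ∀ w : N.WalkIdx, N.StaysInHorizon g w.1.1) {e : E} {φ : ℝ → ℝ≥0∞}
    (hφ : AEMeasurable φ (N.loadMeasure g h e)) :
    ∫⁻ t, φ t ∂N.loadMeasure g h e = ∑' w : N.WalkIdx, ∑ j ∈ positions w.1.1 e,
      ∫⁻ t, φ (N.arrive g (w.1.1.take j) t) ∂N.flowMeasure (h w) := by
  rw [loadMeasure, lintegral_sum_measure]
  refine tsum_congr fun w => ?_
  rw [lintegral_finsetSum_measure]
  refine Finset.sum_congr rfl fun j hj => lintegral_map' (hφ.mono_measure ?_)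
    ((hst w).aemeasurable_arrive_take hT (le_length_of_mem_positions hj))
  refine LE.le.trans ?_ (Measure.le_sum _ w)
  exact Finset.single_le_sum
    (f := fun j => (N.flowMeasure (h w)).map (N.arrive g (w.1.1.take j)))
    (fun _ _ => Measure.zero_le _) hj

theorem ae_loadMeasure_mem_H (hT : ∀ e, MonotoneOn (N.Te e (g e)) N.H)
    (hst : ∀ w : N.WalkIdx, N.StaysInHorizon g w.1.1) (e : E) :
    ∀ᵐ t ∂N.loadMeasure g h e, t ∈ N.H := by
  refine (loadMeasure_apply hT hst e N.measurableSet_H.compl).trans ?_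
  refine ENNReal.tsum_eq_zero.2 fun w => Finset.sum_eq_zero fun j hj => ?_
  exact (N.ae_flowMeasure_mem_H (h w)).mono fun t ht =>
    hst w j (le_length_of_mem_positions hj) ht

theorem isFiniteMeasure_loadMeasure (hT : ∀ e, MonotoneOn (N.Te e (g e)) N.H)
    (hst : ∀ w : N.WalkIdx, N.StaysInHorizon g w.1.1) (hh : N.FeasibleInflow h) {e : E} {n : ℕ}
    (hn : ∀ w : N.WalkIdx, N.flowMeasure (h w) ≠ 0 → (positions w.1.1 e).card ≤ n) :
    IsFiniteMeasure (N.loadMeasure g h e) := by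
  refine ⟨?_⟩
  calc N.loadMeasure g h e univ
      = ∑' w : N.WalkIdx, (positions w.1.1 e).card * N.flowMeasure (h w) univ := by
        simp only [loadMeasure_apply hT hst e MeasurableSet.univ, preimage_univ, Finset.sum_const,
          nsmul_eq_mul]
    _ ≤ ∑' w, n * N.flowMeasure (h w) univ := by
        refine ENNReal.tsum_le_tsum fun w => ?_
        rcases eq_or_ne (N.flowMeasure (h w)) 0 with hw | hw
        · simp only [hw, Measure.coe_zero, Pi.zero_apply, mul_zero, le_refl]
        · gcongr
          exact hn w hw
    _ = n * ∑' w, N.flowMeasure (h w) univ := ENNReal.tsum_mul_left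
    _ < ⊤ := ENNReal.mul_lt_top (ENNReal.natCast_lt_top n)
        hh.tsum_flowMeasure_univ_ne_top.lt_top

/-- The finiteness assumption rules out the junk value `0` of a divergent real `tsum` in the
loading equation. -/
theorem flowMeasure_eq_loadMeasure (hT : ∀ e, MonotoneOn (N.Te e (g e)) N.H)
    (hst : ∀ w : N.WalkIdx, N.StaysInHorizon g w.1.1) (hh : ∀ w, N.MemL1pos (h w))
    (hgh : N.Induces h g) {e : E} (hg : N.MemL1pos (g e))
    [IsFiniteMeasure (N.loadMeasure g h e)] :
    N.flowMeasure (g e) = N.loadMeasure g h e := by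
  have := isFiniteMeasure_flowMeasure hg
  have := fun w => isFiniteMeasure_flowMeasure (hh w)
  refine measure_ext_of_measureReal_Icc (N.ae_flowMeasure_mem_H _) (ae_loadMeasure_mem_H hT hst e)
    fun t ht => ?_
  have hsub : Icc 0 t ⊆ N.H := Icc_subset_Icc_right ht.2
  rw [measureReal_flowMeasure hg, inter_eq_left.2 hsub, hgh e t ht, measureReal_def,
    loadMeasure_apply hT hst e measurableSet_Icc,
    ENNReal.tsum_toReal_eq fun w => ENNReal.sum_ne_top.2 fun j _ => measure_ne_top _ _]
  refine tsum_congr fun w => ?_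
  rw [ENNReal.toReal_sum fun j _ => measure_ne_top _ _, positions, Finset.sum_filter]
  refine Finset.sum_congr rfl fun j _ => if_congr Iff.rfl ?_ rfl
  rw [← measureReal_def, measureReal_flowMeasure (hh w), inter_comm]
  rfl

theorem sum_lintegral_travelTime [Fintype E] (hT : ∀ e, MonotoneOn (N.Te e (g e)) N.H)
    (hD : ∀ e, ∀ t ∈ N.H, 0 ≤ N.D e (g e) t)
    (hst : ∀ w : N.WalkIdx, N.StaysInHorizon g w.1.1)
    (hload : ∀ e, N.flowMeasure (g e) = N.loadMeasure g h e) :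
    ∑ e, ∫⁻ t, ENNReal.ofReal (N.D e (g e) t) ∂N.flowMeasure (g e) =
      ∑' w : N.WalkIdx, ∫⁻ t, ENNReal.ofReal (N.arrive g w.1.1 t - t) ∂N.flowMeasure (h w) := by
  calc ∑ e, ∫⁻ t, ENNReal.ofReal (N.D e (g e) t) ∂N.flowMeasure (g e)
      = ∑ e, ∑' w : N.WalkIdx, ∑ j ∈ positions w.1.1 e,
          ∫⁻ t, ENNReal.ofReal (N.D e (g e) (N.arrive g (w.1.1.take j) t))
            ∂N.flowMeasure (h w) := by
        refine Finset.sum_congr rfl fun e _ => ?_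
        have hmeas : AEMeasurable (N.D e (g e)) (N.flowMeasure (g e)) :=
          (aemeasurable_travelTime (hT e)).mono_ac (withDensity_absolutelyContinuous _ _)
        rw [hload] at hmeas ⊢
        exact lintegral_loadMeasure hT hst hmeas.ennreal_ofReal
    _ = ∑' w : N.WalkIdx, ∑ e, ∑ j ∈ positions w.1.1 e,
          ∫⁻ t, ENNReal.ofReal (N.D e (g e) (N.arrive g (w.1.1.take j) t))
            ∂N.flowMeasure (h w) :=
        (Summable.tsum_finsetSum fun _ _ => ENNReal.summable).symm
    _ = _ := tsum_congr fun w =>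
        (sum_sum_positions w.1.1 _).trans (lintegral_sum_travelTime hT hD (hst w))

theorem sum_lintegral_travelTime_add_lintegral_remaining [Fintype E] [Fintype I]
    (hT : ∀ e, MonotoneOn (N.Te e (g e)) N.H) (hD : ∀ e, ∀ t ∈ N.H, 0 ≤ N.D e (g e) t)
    (hst : ∀ w : N.WalkIdx, N.StaysInHorizon g w.1.1)
    (hload : ∀ e, N.flowMeasure (g e) = N.loadMeasure g h e)
    (hh : N.FeasibleInflow h) :
    ∑ e, ∫⁻ t, ENNReal.ofReal (N.D e (g e) t) ∂N.flowMeasure (g e) +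
        ∑' w : N.WalkIdx, ∫⁻ t, ENNReal.ofReal (N.tf - N.arrive g w.1.1 t) ∂N.flowMeasure (h w) =
      ∫⁻ t, ENNReal.ofReal (N.tf - t) ∂N.flowMeasure fun t => ∑ i, N.r i t := by
  rw [sum_lintegral_travelTime hT hD hst hload, ← ENNReal.tsum_add, ← hh.sum_flowMeasure,
    lintegral_sum_measure]
  refine tsum_congr fun w => ?_
  rw [← lintegral_add_right' _ ((hst w).aemeasurable_arrive hT |>.const_sub _).ennreal_ofReal]
  refine lintegral_congr_ae ?_
  filter_upwards [N.ae_flowMeasure_mem_H (h w)] with t ht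
  rw [← ENNReal.ofReal_add (sub_nonneg.2 ((hst w).le_arrive hD ht))
    (sub_nonneg.2 ((hst w).mapsTo_arrive ht).2)]
  congr 1
  ring

end Loading

section Sink

variable {V E I : Type} {N : DynNet V E I} {d0 : V}

/-- The edge `(d, d̃)` from the sink to the super sink of the extended network. -/
abbrev sinkEdge {E I : Type} : E ⊕ (I ⊕ Unit) := Sum.inr (Sum.inr ())

theorem isWalk_iff {v₁ v₂ : V} {p : List E} :
    N.IsWalk v₁ v₂ p ↔ p ≠ [] ∧ p.IsChain (fun e e' => N.dst e = N.src e') ∧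
      p.head?.map N.src = some v₁ ∧ p.getLast?.map N.dst = some v₂ :=
  Iff.rfl

theorem isWalk_cons {v₁ v₂ : V} {e : E} {p : List E} :
    N.IsWalk v₁ v₂ (e :: p) ↔
      N.src e = v₁ ∧ (p = [] ∧ N.dst e = v₂ ∨ N.IsWalk (N.dst e) v₂ p) := by
  cases p with
  | nil => simp [isWalk_iff, eq_comm]
  | cons =>
    simp only [isWalk_iff, List.isChain_cons_cons, List.head?_cons, Option.map_some,
      List.getLast?_cons_cons, Option.some.injEq, ne_eq, reduceCtorEq, not_false_eq_true,
      false_and, false_or, true_and, eq_comm]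
    tauto

theorem IsWalk.exists_eq_map_inl_append_sinkEdge {v : V} {p : List (E ⊕ (I ⊕ Unit))}
    (hp : (N.extend d0).IsWalk (Sum.inl v) (Sum.inr true) p) :
    ∃ q : List E, p = q.map Sum.inl ++ [sinkEdge] := by
  induction p generalizing v with
  | nil => exact absurd rfl hp.1
  | cons e p ih =>
    obtain ⟨hsrc, ⟨rfl, hdst⟩ | hp⟩ := isWalk_cons.1 hp
    · rcases e with e | i | u
      · simp [extend] at hdst
      · simp [extend] at hdst
      · exact ⟨[], rfl⟩
    · rcases e with e | i | u
      · obtain ⟨q, rfl⟩ := ih hp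
        exact ⟨e :: q, rfl⟩
      · simp [extend] at hsrc
      · rcases p with _ | ⟨e' | i | u, p⟩
        · exact absurd rfl hp.1
        all_goals simp [isWalk_cons, extend] at hp

theorem IsWalk.exists_eq_cons_map_inl_append_sinkEdge {p : List (E ⊕ (I ⊕ Unit))}
    (hp : (N.extend d0).IsWalk (Sum.inr false) (Sum.inr true) p) :
    ∃ (i : I) (q : List E), p = Sum.inr (Sum.inl i) :: (q.map Sum.inl ++ [sinkEdge]) := by
  rcases p with _ | ⟨e | i | u, p⟩
  · exact absurd rfl hp.1
  · simp [isWalk_cons, extend] at hp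
  · obtain ⟨-, ⟨rfl, hdst⟩ | hp⟩ := isWalk_cons.1 hp
    · simp [extend] at hdst
    · obtain ⟨q, rfl⟩ := hp.exists_eq_map_inl_append_sinkEdge
      exact ⟨i, q, rfl⟩
  · simp [isWalk_cons, extend] at hp

variable {g : E ⊕ (I ⊕ Unit) → ℝ → ℝ} {h : (N.extend d0).WalkIdx → ℝ → ℝ}

theorem length_mul_le_of_arrive_mem_H' {p : List (E ⊕ (I ⊕ Unit))} {τ t : ℝ}
    (hp : (N.extend d0).IsWalk (Sum.inr false) (Sum.inr true) p)
    (hst : (N.extend d0).StaysInHorizon g p)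
    (hD : ∀ e, ∀ t ∈ N.H, 0 ≤ (N.extend d0).D e (g e) t)
    (hlb : ∀ e, ∀ t ∈ N.H', τ ≤ N.D e (g (Sum.inl e)) t)
    (ht : t ∈ N.H) (harr : (N.extend d0).arrive g p t ∈ N.H') :
    (p.length - 2) * τ ≤ N.tf' := by
  have hprefix (j : ℕ) (hj : j < p.length) : (N.extend d0).arrive g (p.take j) t ∈ N.H' := by
    refine ⟨(hst j hj.le ht).1, le_trans ?_ harr.2⟩
    simpa only [List.take_length] using hst.arrive_take_mono hD ht hj.le le_rfl
  have hb (e : E ⊕ (I ⊕ Unit)) (s : ℝ) (hs : s ∈ N.H') :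
      Sum.elim (fun _ => τ) (fun _ => 0) e ≤ (N.extend d0).D e (g e) s := by
    rcases e with e | e
    · exact hlb e s hs
    · exact le_rfl
  have hsum := sum_map_le_arrive_sub hb hprefix
  obtain ⟨i, q, rfl⟩ := hp.exists_eq_cons_map_inl_append_sinkEdge
  calc _ = (q.length : ℝ) * τ := by
        simp only [List.length_cons, List.length_append, List.length_map, List.length_nil]
        push_cast
        ring
    _ ≤ (N.extend d0).arrive g _ t - t := by simpa [Function.comp_def] using hsum
    _ ≤ N.tf' := (sub_le_self _ ht.1).trans harr.2

theorem length_le_of_flowMeasure_ne_zero {τ : ℝ} (hτ : 0 < τ)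
    (hT : ∀ e, MonotoneOn ((N.extend d0).Te e (g e)) N.H)
    (hD : ∀ e, ∀ t ∈ N.H, 0 ≤ (N.extend d0).D e (g e) t)
    (hlb : ∀ e, ∀ t ∈ N.H', τ ≤ N.D e (g (Sum.inl e)) t)
    (hst : ∀ w : (N.extend d0).WalkIdx, (N.extend d0).StaysInHorizon g w.1.1)
    (hsink : (N.extend d0).flowMeasure (g sinkEdge) = Measure.sum fun w =>
      ((N.extend d0).flowMeasure (h w)).map ((N.extend d0).arrive g w.1.1))
    (hg : N.MemL1pos (g sinkEdge)) (hsupp : SuppOn N.H' (g sinkEdge)) {w : (N.extend d0).WalkIdx}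
    (hw : (N.extend d0).flowMeasure (h w) ≠ 0) : w.1.1.length ≤ ⌊N.tf' / τ + 2⌋₊ := by
  have hmem : ∀ᵐ t ∂(N.extend d0).flowMeasure (g sinkEdge), t ∈ N.H' :=
    ae_flowMeasure_mem_of_suppOn hg hsupp
  rw [hsink] at hmem
  have harr : ∀ᵐ t ∂(N.extend d0).flowMeasure (h w), (N.extend d0).arrive g w.1.1 t ∈ N.H' :=
    ae_of_ae_map ((hst w).aemeasurable_arrive hT)
      ((Measure.ae_sum_iff' N.measurableSet_H').1 hmem w)
  have := ae_neBot.2 hw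
  obtain ⟨t, ht, htarr⟩ := (((N.extend d0).ae_flowMeasure_mem_H (h w)).and harr).exists
  refine Nat.le_floor ?_
  rw [← sub_le_iff_le_add, le_div_iff₀ hτ]
  exact length_mul_le_of_arrive_mem_H' w.2 (hst w) hD hlb ht htarr

theorem lintegral_remaining_sinkEdge (hT : ∀ e, MonotoneOn ((N.extend d0).Te e (g e)) N.H)
    (hst : ∀ w : (N.extend d0).WalkIdx, (N.extend d0).StaysInHorizon g w.1.1)
    (hsink : (N.extend d0).flowMeasure (g sinkEdge) = Measure.sum fun w =>
      ((N.extend d0).flowMeasure (h w)).map ((N.extend d0).arrive g w.1.1)) :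
    ∫⁻ t, ENNReal.ofReal (N.tf - t) ∂(N.extend d0).flowMeasure (g sinkEdge) =
      ∑' w : (N.extend d0).WalkIdx, ∫⁻ t, ENNReal.ofReal (N.tf - (N.extend d0).arrive g w.1.1 t)
        ∂(N.extend d0).flowMeasure (h w) := by
  rw [hsink, lintegral_sum_measure]
  exact tsum_congr fun w => lintegral_map'
    (measurable_const.sub measurable_id).ennreal_ofReal.aemeasurable
    ((hst w).aemeasurable_arrive hT)

variable [DecidableEq E] [DecidableEq I]

theorem loadMeasure_sinkEdge :
    (N.extend d0).loadMeasure g h sinkEdge = Measure.sum fun w =>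
      ((N.extend d0).flowMeasure (h w)).map ((N.extend d0).arrive g w.1.1) := by
  rw [loadMeasure]
  congr 1 with w : 1
  obtain ⟨i, q, hw⟩ := w.2.exists_eq_cons_map_inl_append_sinkEdge
  rw [hw, ← List.cons_append, positions_concat (by simp), Finset.sum_singleton, List.take_left]
  congr 1 with t
  rw [arrive_append]
  exact (add_zero _).symm

theorem card_positions_sinkEdge_le_one (w : (N.extend d0).WalkIdx) :
    (positions w.1.1 sinkEdge).card ≤ 1 := by
  obtain ⟨i, q, hw⟩ := w.2.exists_eq_cons_map_inl_append_sinkEdge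
  rw [hw, ← List.cons_append, positions_concat (by simp), Finset.card_singleton]

theorem flowMeasure_sinkEdge (hT : ∀ e, MonotoneOn ((N.extend d0).Te e (g e)) N.H)
    (hst : ∀ w : (N.extend d0).WalkIdx, (N.extend d0).StaysInHorizon g w.1.1)
    (hh : (N.extend d0).FeasibleInflow h) (hgh : (N.extend d0).Induces h g)
    (hg : N.MemL1pos (g sinkEdge)) :
    (N.extend d0).flowMeasure (g sinkEdge) = Measure.sum fun w =>
      ((N.extend d0).flowMeasure (h w)).map ((N.extend d0).arrive g w.1.1) := by
  have := isFiniteMeasure_loadMeasure hT hst hh fun w _ => card_positions_sinkEdge_le_one w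
  rw [flowMeasure_eq_loadMeasure hT hst hh.1 hgh hg, loadMeasure_sinkEdge]

theorem flowMeasure_eq_loadMeasure_extend {τ : ℝ} (hτ : 0 < τ)
    (hT : ∀ e, MonotoneOn ((N.extend d0).Te e (g e)) N.H)
    (hD : ∀ e, ∀ t ∈ N.H, 0 ≤ (N.extend d0).D e (g e) t)
    (hlb : ∀ e, ∀ t ∈ N.H', τ ≤ N.D e (g (Sum.inl e)) t)
    (hst : ∀ w : (N.extend d0).WalkIdx, (N.extend d0).StaysInHorizon g w.1.1)
    (hh : (N.extend d0).FeasibleInflow h) (hgh : (N.extend d0).Induces h g)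
    (hg : ∀ e, N.MemL1pos (g e)) (hsupp : SuppOn N.H' (g sinkEdge)) (e : E ⊕ (I ⊕ Unit)) :
    (N.extend d0).flowMeasure (g e) = (N.extend d0).loadMeasure g h e := by
  have := isFiniteMeasure_loadMeasure hT hst hh (e := e) fun w hw =>
    (card_positions_le w.1.1 e).trans (length_le_of_flowMeasure_ne_zero hτ hT hD hlb hst
      (flowMeasure_sinkEdge hT hst hh hgh (hg sinkEdge)) (hg sinkEdge) hsupp hw)
  exact flowMeasure_eq_loadMeasure hT hst hh.1 hgh (hg e)

end Sink

section NodeBalance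

variable {V E I : Type} {N : DynNet V E I} {d0 : V}

theorem cumOut_extend_sinkEdge {f : ℝ → ℝ} {t : ℝ} (ht : t ∈ N.H) :
    (N.extend d0).cumOut sinkEdge f t = cumIn f t := by
  have hTe (s : ℝ) : (N.extend d0).Te sinkEdge f s = s := add_zero s
  have hsub : Icc 0 t ⊆ N.H := Icc_subset_Icc_right ht.2
  simp only [cumOut, cumIn, hTe]
  rw [show {s | s ∈ (N.extend d0).H ∧ s ∈ Icc 0 t} = Icc 0 t from inter_eq_right.2 hsub]

variable [Fintype E] [Fintype I] [DecidableEq V]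

theorem nodeBal_extend_superSink {g : E ⊕ (I ⊕ Unit) → ℝ → ℝ} {t : ℝ}
    (ht : t ∈ N.H) : (N.extend d0).nodeBal g (Sum.inr true) t = -cumIn (g sinkEdge) t := by
  rw [← cumOut_extend_sinkEdge (d0 := d0) ht]
  simp [nodeBal, extend, Fintype.sum_sum_type]

theorem integral_nodeBal_extend_superSink {g : E ⊕ (I ⊕ Unit) → ℝ → ℝ}
    (hg : N.MemL1pos (g sinkEdge)) :
    ∫ t in N.H, (N.extend d0).nodeBal g (Sum.inr true) t =
      -∫ t in N.H, (N.tf - t) * g sinkEdge t := by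
  rw [setIntegral_congr_fun N.measurableSet_H fun t ht => nodeBal_extend_superSink ht,
    integral_neg, H, ← setIntegral_setIntegral_Icc hg.2]
  rfl

end NodeBalance

section TotalCost

variable {V E I : Type} {N : DynNet V E I} {f : ℝ → ℝ}

theorem integral_remaining_mul (hf : N.MemL1pos f) :
    ∫ t in N.H, (N.tf - t) * f t =
      (∫⁻ t, ENNReal.ofReal (N.tf - t) ∂N.flowMeasure f).toReal :=
  integral_mul_eq_toReal_lintegral_flowMeasure hf
    (measurable_const.sub measurable_id).aemeasurable fun _ ht => sub_nonneg.2 ht.2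

theorem lintegral_remaining_ne_top (hf : N.MemL1pos f) :
    ∫⁻ t, ENNReal.ofReal (N.tf - t) ∂N.flowMeasure f ≠ ⊤ := by
  have := isFiniteMeasure_flowMeasure hf
  refine ne_top_of_le_ne_top (lintegral_const_lt_top (μ := N.flowMeasure f)
    (ENNReal.ofReal_ne_top (r := N.tf))).ne (lintegral_mono_ae ?_)
  filter_upwards [N.ae_flowMeasure_mem_H f] with t ht
  exact ENNReal.ofReal_le_ofReal (sub_le_self _ ht.1)

theorem totalCost_eq_toReal [Fintype E] {g : E → ℝ → ℝ} (hg : ∀ e, N.MemL1pos (g e))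
    (hT : ∀ e, MonotoneOn (N.Te e (g e)) N.H) (hD : ∀ e, ∀ t ∈ N.H, 0 ≤ N.D e (g e) t)
    (hfin : ∑ e, ∫⁻ t, ENNReal.ofReal (N.D e (g e) t) ∂N.flowMeasure (g e) ≠ ⊤) :
    N.totalCost g =
      (∑ e, ∫⁻ t, ENNReal.ofReal (N.D e (g e) t) ∂N.flowMeasure (g e)).toReal := by
  rw [ENNReal.toReal_sum (ENNReal.sum_ne_top.1 hfin), totalCost]
  exact Finset.sum_congr rfl fun e _ => integral_mul_eq_toReal_lintegral_flowMeasure (hg e)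
    (aemeasurable_travelTime (hT e)) (hD e)

theorem MemL1pos.sum {ι : Type*} [Fintype ι] {f : ι → ℝ → ℝ} (hf : ∀ i, N.MemL1pos (f i)) :
    N.MemL1pos fun t => ∑ i, f i t :=
  ⟨fun t => Finset.sum_nonneg fun i _ => (hf i).1 t, integrable_finsetSum _ fun i _ => (hf i).2⟩

theorem travelTime_extend_nonneg {d0 : V} {g : E ⊕ (I ⊕ Unit) → ℝ → ℝ}
    (hD : ∀ e, ∀ t ∈ N.H, 0 ≤ N.D e (g (Sum.inl e)) t) (e : E ⊕ (I ⊕ Unit)) :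
    ∀ t ∈ N.H, 0 ≤ (N.extend d0).D e (g e) t := by
  rcases e with e | _
  · exact hD e
  · exact fun _ _ => le_rfl

theorem monotoneOn_Te_extend {d0 : V} {g : E ⊕ (I ⊕ Unit) → ℝ → ℝ}
    (hT : ∀ e, MonotoneOn (N.Te e (g (Sum.inl e))) N.H) (e : E ⊕ (I ⊕ Unit)) :
    MonotoneOn ((N.extend d0).Te e (g e)) N.H := by
  rcases e with e | _
  · exact hT e
  · exact monotoneOn_id.congr fun t _ => (add_zero t).symm

end TotalCost

end DynNet

open DynNet in
theorem total_travel_time_rewrite_extended_general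
    {V E I : Type} [Fintype E] [DecidableEq E] [Fintype I] [DecidableEq I] [DecidableEq V]
    (N : DynNet V E I) (d0 : V) {τ : ℝ} (hτ : 0 < τ) (hr : ∀ i, N.MemL1pos (N.r i))
    {g : E ⊕ (I ⊕ Unit) → ℝ → ℝ} {h : (N.extend d0).WalkIdx → ℝ → ℝ}
    (hg : ∀ e, N.MemL1pos (g e)) (hsupp : SuppOn N.H' (g sinkEdge))
    (hD : ∀ e, ∀ t ∈ N.H, 0 ≤ N.D e (g (Sum.inl e)) t)
    (hT : ∀ e, MonotoneOn (N.Te e (g (Sum.inl e))) N.H)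
    (hlb : ∀ e, ∀ t ∈ N.H', τ ≤ N.D e (g (Sum.inl e)) t)
    (hst : ∀ w : (N.extend d0).WalkIdx, (N.extend d0).StaysInHorizon g w.1.1)
    (hh : (N.extend d0).FeasibleInflow h) (hgh : (N.extend d0).Induces h g) :
    (N.extend d0).totalCost g =
      (∫ t in N.H, (N.tf - t) * ∑ i : I, N.r i t) +
        ∫ t in N.H, (N.extend d0).nodeBal g (Sum.inr true) t := by
  have hD' := travelTime_extend_nonneg (d0 := d0) hD
  have hT' := monotoneOn_Te_extend (d0 := d0) hT
  have hload := flowMeasure_eq_loadMeasure_extend hτ hT' hD' hlb hst hh hgh hg hsupp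
  have hrsum : N.MemL1pos fun t => ∑ i, N.r i t := MemL1pos.sum hr
  have hbalance :
      ∑ e, ∫⁻ t, ENNReal.ofReal ((N.extend d0).D e (g e) t) ∂(N.extend d0).flowMeasure (g e) +
          ∫⁻ t, ENNReal.ofReal (N.tf - t) ∂N.flowMeasure (g sinkEdge) =
        ∫⁻ t, ENNReal.ofReal (N.tf - t) ∂N.flowMeasure fun t => ∑ i, N.r i t :=
    (congrArg _ (lintegral_remaining_sinkEdge hT' hst
      ((hload sinkEdge).trans loadMeasure_sinkEdge))).trans
      (sum_lintegral_travelTime_add_lintegral_remaining hT' hD' hst hload hh)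
  obtain ⟨htravel, hsink⟩ := ENNReal.add_ne_top.1 (hbalance ▸ lintegral_remaining_ne_top hrsum)
  rw [totalCost_eq_toReal hg hT' hD' htravel, integral_nodeBal_extend_superSink (hg sinkEdge),
    integral_remaining_mul (hg sinkEdge), integral_remaining_mul hrsum, ← hbalance,
    ENNReal.toReal_add htravel hsink, add_neg_cancel_right]

/-!
STATEMENT 8 (Claim `TotalTravelRewrite`):
In the extended network, for every induced edge flow `g ∈ ℓ(Λ̃)` the total travel
time rewrites as
`⟨D(g,·), g⟩ = ∫_H (t_f − t)·Σ_i r_i(t) dt + ∫_H ∇_{d̃} G(t) dt`.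
-/
theorem total_travel_time_rewrite_extended
    {V E I : Type} [Fintype E] [DecidableEq E] [Fintype I] [DecidableEq I]
    [DecidableEq V]
    (N : DynNet V E I) (τmin τmax : ℝ) (d0 : V)
    (hH : 0 < N.tf' ∧ N.tf' < N.tf)
    (hr : ∀ i, N.MemL1pos (N.r i) ∧
      ¬ (∀ᵐ t ∂(MeasureTheory.volume.restrict N.H), N.r i t = 0))
    (hTG : N.TravelGeneral τmin)
    (hUB : (N.extend d0).TravelUBSet τmax)
    (hA : (N.extend d0).AMapsHToHSet)
    (hsink : ∀ i, N.d i = d0)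
    (g : (E ⊕ (I ⊕ Unit)) → ℝ → ℝ)
    (hg : g ∈ (N.extend d0).InducedSet) :
    (N.extend d0).totalCost g =
      (∫ t in N.H, (N.tf - t) * ∑ i : I, N.r i t) +
        ∫ t in N.H, (N.extend d0).nodeBal g (Sum.inr true) t := by
  have hst := hA g hg
  obtain ⟨hgL, h, ⟨hh, -⟩, hgh⟩ := hg
  have hgE (e : E) : N.MemL1pos (g (.inl e)) := (hgL (.inl e)).1
  exact total_travel_time_rewrite_extended_general N d0 hTG.tmin_pos (fun i => (hr i).1)
    (fun e => (hgL e).1) (hgL _).2 (fun e => hTG.nonneg e _ (hgE e))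
    (fun e => hTG.fifo e _ (hgE e)) (fun e => hTG.lb e _ (hgE e)) hst hh hgh
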